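/- arXiv:2407.11386 — 2 statements merged into one kernel-verified Lean document; each statement's English description precedes it below -/
import Mathlib

section
/- Let q > 1, let μ be a probability measure on ℝ with μ([0,∞)) = 1, and suppose the set {λ > 0 : ∫ exp(λ^q·x^q) dμ(x) < ∞} is nonempty; let R = sSup of this set in [0,∞]. Let θ ∈ ℝ and let ν be the exponentially tilted measure with density x ↦ exp(θ·x)/∫ exp(θ·y) dμ(y) with respect to μ. Then for every real λ > R, ∫ exp(λ^q·x^q) dν(x) = ∞. Together with the finiteness below R, the tilted measure ν has the same radius of convergence R as μ. -/
open MeasureTheory Real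

/-!
Since `q > 1`, Young's inequality gives `c * x ≤ a * |x| ^ q + K` for every `a > 0`, with `K`
depending only on `a` and `c`: passing from `t` to any `lam > t` in `exp (t ^ q * |x| ^ q)` absorbs
an exponential factor `exp (c * x)` up to a constant. Tilting by `θ * x` amounts to such a factor,
and so cannot make a moment of order `lam` finite when the moment of order `t < lam` is infinite.
-/

open scoped ENNReal

theorem exists_mul_le_mul_abs_rpow_add {q : ℝ} (hq : 1 < q) {a : ℝ} (ha : 0 < a) (c : ℝ) :
    ∃ K : ℝ, ∀ x : ℝ, c * x ≤ a * |x| ^ q + K := by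
  have hq₀ : 0 < q := one_pos.trans hq
  set p := q.conjExponent
  -- The scale at which the term `|δ * x| ^ q / q` of Young's inequality is `a * |x| ^ q`.
  set δ := (a * q) ^ q⁻¹
  have hδ : 0 < δ := by positivity
  have hδq : δ ^ q = a * q := rpow_inv_rpow (by positivity) hq₀.ne'
  refine ⟨|c / δ| ^ p / p, fun x => ?_⟩
  calc c * x = δ * x * (c / δ) := by field_simp
    _ ≤ |δ * x| ^ q / q + |c / δ| ^ p / p :=
        young_inequality _ _ (.conjExponent hq)
    _ = a * |x| ^ q + |c / δ| ^ p / p := by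
        rw [abs_mul, abs_of_pos hδ, mul_rpow hδ.le (abs_nonneg x), hδq]
        field_simp

section

variable {Ω : Type*} {mΩ : MeasurableSpace Ω} {μ : Measure Ω}

theorem lintegral_ofReal_exp_lt_top_of_le_add_const {g h : Ω → ℝ} {K : ℝ}
    (hgh : ∀ᵐ ω ∂μ, g ω ≤ h ω + K) (hh : ∫⁻ ω, ENNReal.ofReal (exp (h ω)) ∂μ < ⊤) :
    ∫⁻ ω, ENNReal.ofReal (exp (g ω)) ∂μ < ⊤ :=
  calc ∫⁻ ω, ENNReal.ofReal (exp (g ω)) ∂μ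
      ≤ ∫⁻ ω, ENNReal.ofReal (exp (h ω)) * ENNReal.ofReal (exp K) ∂μ := by
        refine lintegral_mono_ae (hgh.mono fun ω hω => ?_)
        rw [← ENNReal.ofReal_mul (exp_pos _).le, ← exp_add]
        exact ENNReal.ofReal_le_ofReal (exp_le_exp.2 hω)
    _ = (∫⁻ ω, ENNReal.ofReal (exp (h ω)) ∂μ) * ENNReal.ofReal (exp K) :=
        lintegral_mul_const' _ _ ENNReal.ofReal_ne_top
    _ < ⊤ := ENNReal.mul_lt_top hh ENNReal.ofReal_lt_top

theorem lintegral_ofReal_exp_add_eq_mul_lintegral_tilted {f : Ω → ℝ}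
    (hf : Integrable (fun ω => exp (f ω)) μ) (h : Ω → ℝ) :
    ∫⁻ ω, ENNReal.ofReal (exp (f ω + h ω)) ∂μ =
      ENNReal.ofReal (∫ ω, exp (f ω) ∂μ) * ∫⁻ ω, ENNReal.ofReal (exp (h ω)) ∂(μ.tilted f) := by
  rcases eq_zero_or_neZero μ with rfl | _
  · simp
  have hZ : 0 < ∫ ω, exp (f ω) ∂μ := integral_exp_pos hf
  rw [lintegral_tilted, ← lintegral_const_mul' _ _ ENNReal.ofReal_ne_top]
  refine lintegral_congr fun ω => ?_
  rw [← mul_assoc, ← ENNReal.ofReal_mul hZ.le, mul_div_cancel₀ _ hZ.ne',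
    ← ENNReal.ofReal_mul (exp_pos _).le, exp_add]

/-- The moment `∫ exp (lam ^ q * |X| ^ q) dμ ∈ [0, ∞]` whose finiteness, for some `lam > 0`,
expresses that the real random variable `X` is `q`-subweibull under `μ`. -/
noncomputable def subweibullMoment (q : ℝ) (X : Ω → ℝ) (μ : Measure Ω) (lam : ℝ) : ℝ≥0∞ :=
  ∫⁻ ω, ENNReal.ofReal (exp (lam ^ q * |X ω| ^ q)) ∂μ

/-- The radius of convergence `R_q ∈ [0, ∞]` of a real random variable `X` under `μ`; the supremum
of the empty set being `0`, it vanishes when `X` is not `q`-subweibull. -/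
noncomputable def subweibullRadius (q : ℝ) (X : Ω → ℝ) (μ : Measure Ω) : ℝ≥0∞ :=
  sSup (ENNReal.ofReal '' {lam : ℝ | 0 < lam ∧ subweibullMoment q X μ lam < ⊤})

variable {q θ lam : ℝ} {X : Ω → ℝ}

theorem subweibullMoment_of_nonneg (hX : ∀ᵐ ω ∂μ, 0 ≤ X ω) (q lam : ℝ) :
    subweibullMoment q X μ lam = ∫⁻ ω, ENNReal.ofReal (exp (lam ^ q * X ω ^ q)) ∂μ :=
  lintegral_congr_ae (hX.mono fun ω hω => by simp only [abs_of_nonneg hω])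

theorem subweibullMoment_eq_top_of_subweibullRadius_lt
    (hlam : subweibullRadius q X μ < ENNReal.ofReal lam) : subweibullMoment q X μ lam = ⊤ := by
  by_contra h
  have hlam₀ : 0 < lam := ENNReal.ofReal_pos.1 (pos_of_gt hlam)
  exact hlam.not_ge (le_sSup ⟨lam, ⟨hlam₀, lt_top_iff_ne_top.2 h⟩, rfl⟩)

theorem integrable_exp_mul_of_subweibullMoment_lt_top (hq : 1 < q) (hX : AEMeasurable X μ)
    (hlam : 0 < lam) (hfin : subweibullMoment q X μ lam < ⊤) (θ : ℝ) :
    Integrable (fun ω => exp (θ * X ω)) μ := by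
  obtain ⟨K, hK⟩ := exists_mul_le_mul_abs_rpow_add hq (rpow_pos_of_pos hlam q) θ
  refine ⟨(hX.const_mul θ).exp.aestronglyMeasurable, ?_⟩
  rw [hasFiniteIntegral_iff_ofReal (ae_of_all _ fun _ => (exp_pos _).le)]
  exact lintegral_ofReal_exp_lt_top_of_le_add_const (ae_of_all _ fun ω => hK (X ω)) hfin

theorem subweibullMoment_lt_top_of_tilted (hq : 1 < q)
    (hθ : Integrable (fun ω => exp (θ * X ω)) μ) {t : ℝ} (ht : 0 ≤ t) (htlam : t < lam)
    (hfin : subweibullMoment q X (μ.tilted fun ω => θ * X ω) lam < ⊤) :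
    subweibullMoment q X μ t < ⊤ := by
  have hgap : 0 < lam ^ q - t ^ q := sub_pos.2 (rpow_lt_rpow ht htlam (one_pos.trans hq))
  obtain ⟨K, hK⟩ := exists_mul_le_mul_abs_rpow_add hq hgap (-θ)
  have hfin_mul : ∫⁻ ω, ENNReal.ofReal (exp (θ * X ω + lam ^ q * |X ω| ^ q)) ∂μ < ⊤ := by
    rw [lintegral_ofReal_exp_add_eq_mul_lintegral_tilted hθ]
    exact ENNReal.mul_lt_top ENNReal.ofReal_lt_top hfin
  refine lintegral_ofReal_exp_lt_top_of_le_add_const (K := K) (ae_of_all _ fun ω => ?_) hfin_mul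
  linarith [hK (X ω)]

theorem tilted_subweibull_nonneg_gt_general (hq : 1 < q)
    (hθ : Integrable (fun ω => exp (θ * X ω)) μ)
    (hlam : subweibullRadius q X μ < ENNReal.ofReal lam) :
    subweibullMoment q X (μ.tilted fun ω => θ * X ω) lam = ⊤ := by
  obtain ⟨t, ht, hRt, htlam⟩ := ENNReal.lt_iff_exists_real_btwn.1 hlam
  have htop : subweibullMoment q X μ t = ⊤ := subweibullMoment_eq_top_of_subweibullRadius_lt hRt
  contrapose! htop
  exact (subweibullMoment_lt_top_of_tilted hq hθ ht (ENNReal.ofReal_lt_ofReal_iff'.1 htlam).1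
    htop.lt_top).ne

end

/-- Preservation of nonnegative subweibull tails under exponential tilting, infiniteness
part: if `μ` is concentrated on `[0,∞)`, is q-subweibull (`q > 1`) with radius of
convergence `R`, then for any tilting parameter `θ` the tilted measure has infinite
subweibull moment for every real `λ > R`; hence the tilted measure has the same radius
of convergence. -/
theorem tilted_subweibull_nonneg_gt (q : ℝ) (hq : 1 < q)
    (μ : Measure ℝ) [IsProbabilityMeasure μ] (hpos : μ (Set.Ici (0 : ℝ)) = 1)
    (hne : {lam : ℝ | 0 < lam ∧
      (∫⁻ x, ENNReal.ofReal (Real.exp (lam ^ q * x ^ q)) ∂μ) < ⊤}.Nonempty)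
    (θ : ℝ) :
    ∀ lam : ℝ,
      sSup (ENNReal.ofReal '' {lam' : ℝ | 0 < lam' ∧
          (∫⁻ x, ENNReal.ofReal (Real.exp (lam' ^ q * x ^ q)) ∂μ) < ⊤})
        < ENNReal.ofReal lam →
      (∫⁻ x, ENNReal.ofReal (Real.exp (lam ^ q * x ^ q))
          ∂(μ.tilted (fun x => θ * x))) = ⊤ := by
  have hμ : ∀ᵐ x ∂μ, 0 ≤ x := (mem_ae_iff_prob_eq_one measurableSet_Ici).2 hpos
  simp only [← subweibullMoment_of_nonneg (X := fun x => x) hμ,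
    ← subweibullMoment_of_nonneg (X := fun x => x) (tilted_absolutelyContinuous μ _ hμ)] at hne ⊢
  obtain ⟨l, hl, hfin⟩ := hne
  have hθ := integrable_exp_mul_of_subweibullMoment_lt_top hq aemeasurable_id' hl hfin θ
  exact fun lam hlam => tilted_subweibull_nonneg_gt_general hq hθ hlam
end

section
/- Let q ≥ 1 and let μ be a probability measure on ℝ such that ∫ exp(λ^q·|x|^q) dμ(x) < ∞ for every λ > 0 (μ is strictly q-subweibull). Then for every θ ∈ ℝ the tilting is well-defined, i.e., ∫ exp(θ·x) dμ(x) < ∞, and the exponentially tilted measure ν with density x ↦ exp(θ·x)/∫ exp(θ·y) dμ(y) with respect to μ is also strictly q-subweibull: ∫ exp(λ^q·|z|^q) dν(z) < ∞ for every λ > 0. -/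
open MeasureTheory Real

/-!
For `q ≥ 1` a continuous linear functional is dominated by `1 + ‖x‖ ^ q` up to a constant. Strict
`q`-subweibullity controls `exp (c * ‖x‖ ^ q)` for every `c`, so the tilt and the exponential moment
under test can be absorbed together into one such exponential, at a larger scale.
-/

lemma self_le_one_add_rpow {x q : ℝ} (hx : 0 ≤ x) (hq : 1 ≤ q) : x ≤ 1 + x ^ q := by
  rcases le_total x 1 with hx1 | hx1
  · exact hx1.trans (le_add_of_nonneg_right (rpow_nonneg hx q))
  · exact (self_le_rpow_of_one_le hx1 hq).trans (le_add_of_nonneg_left zero_le_one)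

lemma lintegral_exp_tilted {α : Type*} [MeasurableSpace α] (μ : Measure α) (f g : α → ℝ) :
    ∫⁻ x, ENNReal.ofReal (exp (g x)) ∂(μ.tilted f) =
      ENNReal.ofReal (∫ x, exp (f x) ∂μ)⁻¹ * ∫⁻ x, ENNReal.ofReal (exp (f x + g x)) ∂μ := by
  rw [lintegral_tilted, ← lintegral_const_mul' _ _ ENNReal.ofReal_ne_top]
  congr with x
  rw [← ENNReal.ofReal_mul' (exp_nonneg _), ← ENNReal.ofReal_mul' (exp_nonneg _), exp_add,
    div_mul_eq_mul_div, div_eq_inv_mul]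

/-- A measure is strictly `q`-subweibull if `exp (lam ^ q * ‖x‖ ^ q)` has finite integral for every
scale `lam > 0`. The measure need not be normalized. The integral is the lower Lebesgue integral,
since finiteness of a Bochner integral would say nothing. -/
def IsStrictlySubweibull {E : Type*} [Norm E] [MeasurableSpace E] (q : ℝ) (μ : Measure E) : Prop :=
  ∀ lam > (0 : ℝ), ∫⁻ x, ENNReal.ofReal (exp (lam ^ q * ‖x‖ ^ q)) ∂μ < ⊤

namespace IsStrictlySubweibull

variable {E : Type*} [SeminormedAddCommGroup E] [MeasurableSpace E] {μ : Measure E}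
  {q A B : ℝ} {f : E → ℝ}

lemma lintegral_exp_mul_rpow_lt_top (hμ : IsStrictlySubweibull q μ) (hq : q ≠ 0) (c : ℝ) :
    ∫⁻ x, ENNReal.ofReal (exp (c * ‖x‖ ^ q)) ∂μ < ⊤ := by
  -- `max` keeps the scale positive when `c ≤ 0`.
  have hpos : 0 < max c 1 := lt_max_of_lt_right one_pos
  have hfin := hμ (max c 1 ^ q⁻¹) (rpow_pos_of_pos hpos _)
  rw [rpow_inv_rpow hpos.le hq] at hfin
  refine lt_of_le_of_lt (lintegral_mono fun x ↦ ?_) hfin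
  gcongr
  exact le_max_left c 1

lemma lintegral_exp_lt_top (hμ : IsStrictlySubweibull q μ) (hq : q ≠ 0)
    (hf : ∀ᵐ x ∂μ, f x ≤ A + B * ‖x‖ ^ q) :
    ∫⁻ x, ENNReal.ofReal (exp (f x)) ∂μ < ⊤ :=
  calc ∫⁻ x, ENNReal.ofReal (exp (f x)) ∂μ
      ≤ ∫⁻ x, ENNReal.ofReal (exp A) * ENNReal.ofReal (exp (B * ‖x‖ ^ q)) ∂μ := by
        refine lintegral_mono_ae (hf.mono fun x hx ↦ ?_)
        rw [← ENNReal.ofReal_mul (exp_nonneg _), ← exp_add]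
        gcongr
    _ = ENNReal.ofReal (exp A) * ∫⁻ x, ENNReal.ofReal (exp (B * ‖x‖ ^ q)) ∂μ :=
        lintegral_const_mul' _ _ ENNReal.ofReal_ne_top
    _ < ⊤ := ENNReal.mul_lt_top ENNReal.ofReal_lt_top (hμ.lintegral_exp_mul_rpow_lt_top hq B)

lemma integrable_exp (hμ : IsStrictlySubweibull q μ) (hq : q ≠ 0) (hfm : AEMeasurable f μ)
    (hf : ∀ᵐ x ∂μ, f x ≤ A + B * ‖x‖ ^ q) : Integrable (fun x ↦ exp (f x)) μ :=
  ⟨hfm.exp.aestronglyMeasurable,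
    (hasFiniteIntegral_iff_ofReal (ae_of_all _ fun _ ↦ exp_nonneg _)).2
      (hμ.lintegral_exp_lt_top hq hf)⟩

lemma tilted (hμ : IsStrictlySubweibull q μ) (hq : q ≠ 0)
    (hf : ∀ᵐ x ∂μ, f x ≤ A + B * ‖x‖ ^ q) : IsStrictlySubweibull q (μ.tilted f) := by
  intro lam _
  have hadd : ∀ᵐ x ∂μ, f x + lam ^ q * ‖x‖ ^ q ≤ A + (B + lam ^ q) * ‖x‖ ^ q :=
    hf.mono fun x hx ↦ by linarith
  rw [lintegral_exp_tilted]
  exact ENNReal.mul_lt_top ENNReal.ofReal_lt_top (hμ.lintegral_exp_lt_top hq hadd)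

end IsStrictlySubweibull

theorem tilted_strictly_subweibull_general {E : Type*} [SeminormedAddCommGroup E] [NormedSpace ℝ E]
    [MeasurableSpace E] [OpensMeasurableSpace E] {μ : Measure E} {q : ℝ} (hq : 1 ≤ q)
    (hμ : IsStrictlySubweibull q μ) (θ : StrongDual ℝ E) :
    Integrable (fun x ↦ exp (θ x)) μ ∧ IsStrictlySubweibull q (μ.tilted θ) := by
  have hq0 : q ≠ 0 := (zero_lt_one.trans_le hq).ne'
  have hθ (x : E) : θ x ≤ ‖θ‖ + ‖θ‖ * ‖x‖ ^ q :=
    calc θ x ≤ ‖θ‖ * ‖x‖ := (le_norm_self _).trans (θ.le_opNorm x)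
      _ ≤ ‖θ‖ * (1 + ‖x‖ ^ q) := by gcongr; exact self_le_one_add_rpow (norm_nonneg x) hq
      _ = ‖θ‖ + ‖θ‖ * ‖x‖ ^ q := by ring
  exact ⟨hμ.integrable_exp hq0 θ.continuous.measurable.aemeasurable (ae_of_all μ hθ),
    hμ.tilted hq0 (ae_of_all μ hθ)⟩

/-- Exponential tilting preserves the strictly q-subweibull property for `q ≥ 1`:
tilting is well-defined for every `θ ∈ ℝ`, and the tilted measure is again strictly
q-subweibull. -/
theorem tilted_strictly_subweibull (q : ℝ) (hq : 1 ≤ q)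
    (μ : Measure ℝ) [IsProbabilityMeasure μ]
    (hstrict : ∀ lam > (0 : ℝ),
      (∫⁻ x, ENNReal.ofReal (Real.exp (lam ^ q * |x| ^ q)) ∂μ) < ⊤) :
    ∀ θ : ℝ,
      (∫⁻ x, ENNReal.ofReal (Real.exp (θ * x)) ∂μ) < ⊤ ∧
        ∀ lam > (0 : ℝ),
          (∫⁻ z, ENNReal.ofReal (Real.exp (lam ^ q * |z| ^ q))
              ∂(μ.tilted (fun x => θ * x))) < ⊤ := fun θ ↦
  (tilted_strictly_subweibull_general hq hstrict (ContinuousLinearMap.mul ℝ ℝ θ)).imp_left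
    Integrable.lintegral_lt_top
end
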